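/- arXiv:2405.02405 — 3 statements merged into one kernel-verified Lean document; each statement's English description precedes it below -/
import Mathlib

section
/- Let f̃ ∈ H²(𝔻²) and let q be a two-variable polynomial of bidegree (N, M) whose reflection q⃖ satisfies q⃖(0) ≠ 0 (i.e., the coefficient of z^N w^M in q is nonzero). Set f = q·f̃ and suppose f(0) ≠ 0. Then for every n ≥ 0 there exists a complex constant c such that p_n*[f] = c · p_n*[q⃖·f̃]. -/
noncomputable section

open Finset

/-- Coefficients of a formal power series in two variables `z, w`
(the coefficient of `z^j w^k` is the value at `(j, k)`). -/
abbrev Coef := ℕ × ℕ → ℂ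

/-- Coefficients of a formal power series in one variable. -/
abbrev Coef1 := ℕ → ℂ

/-- Membership in the Hardy space `H²(𝔻²)`: square-summable coefficients. -/
def MemH2 (f : Coef) : Prop := Summable (fun jk : ℕ × ℕ => ‖f jk‖ ^ 2)

/-- Membership in the Hardy space `H²(𝔻)`. -/
def MemH2₁ (f : Coef1) : Prop := Summable (fun j : ℕ => ‖f j‖ ^ 2)

/-- The `H²(𝔻²)` inner product `⟨f, g⟩ = ∑ a_{jk} conj (b_{jk})`. -/
def Hinner (f g : Coef) : ℂ := ∑' jk : ℕ × ℕ, f jk * (starRingEnd ℂ) (g jk)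

/-- The `H²(𝔻²)` norm. -/
def Hnorm (f : Coef) : ℝ := Real.sqrt (∑' jk : ℕ × ℕ, ‖f jk‖ ^ 2)

/-- The `H²(𝔻)` norm. -/
def Hnorm1 (f : Coef1) : ℝ := Real.sqrt (∑' j : ℕ, ‖f j‖ ^ 2)

/-- The constant function `1` as an element of `H²(𝔻²)`. -/
def oneH : Coef := fun jk => if jk = (0, 0) then 1 else 0

/-- The constant function `1` as an element of `H²(𝔻)`. -/
def oneH1 : Coef1 := fun j => if j = 0 then 1 else 0

/-- Cauchy product `q·f` of two formal power series in two variables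
(used for multiplication of `f ∈ H²(𝔻²)` by a polynomial `q`). -/
def pmul (q f : Coef) : Coef := fun jk =>
  ∑ a ∈ range (jk.1 + 1), ∑ b ∈ range (jk.2 + 1), q (a, b) * f (jk.1 - a, jk.2 - b)

/-- Multiplication of a one-variable power series by a one-variable polynomial. -/
def pmul1 (q : Polynomial ℂ) (f : Coef1) : Coef1 := fun j =>
  ∑ a ∈ range (j + 1), q.coeff a * f (j - a)

/-- Degree-lexicographic enumeration of the monomials in `z, w`:
`chi 0 = (0,0) ↔ 1`, `chi 1 = (1,0) ↔ z`, `chi 2 = (0,1) ↔ w`,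
`chi 3 = (2,0) ↔ z²`, `chi 4 = (1,1) ↔ zw`, `chi 5 = (0,2) ↔ w²`, … -/
def chi : ℕ → ℕ × ℕ
  | 0 => (0, 0)
  | n + 1 =>
    let p := chi n
    if p.1 = 0 then (p.2 + 1, 0) else (p.1 - 1, p.2 + 1)

/-- The monomial `z^(ab.1) w^(ab.2)` as a coefficient function. -/
def mono (ab : ℕ × ℕ) : Coef := fun jk => if jk = ab then 1 else 0

/-- `p` lies in `P_n = span {χ_0, …, χ_n}`. -/
def inPn (n : ℕ) (p : Coef) : Prop := ∀ ab, p ab ≠ 0 → ∃ k ≤ n, chi k = ab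

/-- `p` is a (two-variable) polynomial: finitely many nonzero coefficients. -/
def IsPoly2 (p : Coef) : Prop := (Function.support p).Finite

/-- Evaluation of a power series at the point `(z, w)`
(absolutely convergent for `f ∈ H²(𝔻²)` and `(z,w)` in the open bidisk,
and for any polynomial at any point). -/
def heval (f : Coef) (z w : ℂ) : ℂ := ∑' jk : ℕ × ℕ, f jk * z ^ jk.1 * w ^ jk.2

/-- `p` is the `n`-th optimal polynomial approximant to `1/f`:
`p ∈ P_n` and `p` minimizes `‖qf - 1‖` over `q ∈ P_n`. -/
def IsOPA (f : Coef) (n : ℕ) (p : Coef) : Prop :=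
  inPn n p ∧ ∀ q : Coef, inPn n q →
    Hnorm (pmul p f - oneH) ≤ Hnorm (pmul q f - oneH)

/-- `q` has bidegree `(N, M)`: degree `N` in `z` and degree `M` in `w`. -/
def HasBidegree (q : Coef) (N M : ℕ) : Prop :=
  (∀ a b : ℕ, q (a, b) ≠ 0 → a ≤ N ∧ b ≤ M) ∧ (∃ b, q (N, b) ≠ 0) ∧ (∃ a, q (a, M) ≠ 0)

/-- Reflection of a polynomial of bidegree `(N, M)`:
the coefficient of `z^j w^k` is `conj` of the coefficient of `z^(N-j) w^(M-k)`. -/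
def reflPoly (N M : ℕ) (q : Coef) : Coef := fun jk =>
  if jk.1 ≤ N ∧ jk.2 ≤ M then (starRingEnd ℂ) (q (N - jk.1, M - jk.2)) else 0

/-- The degree-lexicographic index of the monomial `z^(ab.1) w^(ab.2)`
(the inverse of `chi`). -/
def lexIndex (ab : ℕ × ℕ) : ℕ := (ab.1 + ab.2) * (ab.1 + ab.2 + 1) / 2 + ab.2

/-- `pound k j` = the degree-lexicographic index `£(k,j)` of the monomial `(χ_k)^j`. -/
def pound (k j : ℕ) : ℕ := lexIndex (j * (chi k).1, j * (chi k).2)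

/-- The linear factor `z - α` as a coefficient function. -/
def linZ (α : ℂ) : Coef := fun jk => if jk = (1, 0) then 1 else if jk = (0, 0) then -α else 0

/-- The linear factor `w - β` as a coefficient function. -/
def linW (β : ℂ) : Coef := fun jk => if jk = (0, 1) then 1 else if jk = (0, 0) then -β else 0

/-- The iterated power series attached to a coefficient function. -/
def toPS (f : Coef) : PowerSeries (PowerSeries ℂ) :=
  PowerSeries.mk fun j => PowerSeries.mk fun k => f (j, k)

theorem toPS_inj {f g : Coef} (h : toPS f = toPS g) : f = g := by
  funext ⟨j, k⟩
  have := congrArg (fun F => PowerSeries.coeff k (PowerSeries.coeff j F)) h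
  simpa [toPS] using this

theorem toPS_pmul (q f : Coef) : toPS (pmul q f) = toPS q * toPS f := by
  ext j k
  simp only [toPS, PowerSeries.coeff_mul, PowerSeries.coeff_mk, map_sum, pmul]
  rw [Finset.Nat.sum_antidiagonal_eq_sum_range_succ_mk]
  refine Finset.sum_congr rfl fun a _ => ?_
  rw [Finset.Nat.sum_antidiagonal_eq_sum_range_succ_mk]

theorem pmul_left_comm (p q f : Coef) : pmul p (pmul q f) = pmul q (pmul p f) := by
  apply toPS_inj
  simp only [toPS_pmul]
  ring

theorem pmul_eq_zero {p f : Coef} (h : pmul p f = 0) (hf : f (0, 0) ≠ 0) : p = 0 := by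
  have h1 : toPS p * toPS f = 0 := by
    rw [← toPS_pmul, h]; ext; simp [toPS]
  rcases mul_eq_zero.1 h1 with h2 | h2
  · apply toPS_inj; rw [h2]; ext; simp [toPS]
  · exfalso; apply hf
    have := congrArg (fun F => PowerSeries.coeff 0 (PowerSeries.coeff 0 F)) h2
    simpa [toPS, -PowerSeries.coeff_zero_eq_constantCoeff] using this

theorem pmul_zero_zero (p f : Coef) : pmul p f (0, 0) = p (0, 0) * f (0, 0) := by
  simp [pmul]

theorem pmul_smul_left (c : ℂ) (p f : Coef) : pmul (c • p) f = c • pmul p f := by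
  funext jk
  simp [pmul, Finset.mul_sum, mul_assoc]

theorem pmul_add_left (p r f : Coef) : pmul (p + r) f = pmul p f + pmul r f := by
  funext jk
  simp [pmul, Finset.sum_add_distrib, add_mul]

theorem pmul_sub_left (p r f : Coef) : pmul (p - r) f = pmul p f - pmul r f := by
  funext jk
  simp [pmul, Finset.sum_sub_distrib, sub_mul]

/-- Extension by zero to the integer lattice. -/
def extZ (h : Coef) : ℤ × ℤ → ℂ := fun n =>
  if 0 ≤ n.1 ∧ 0 ≤ n.2 then h (n.1.toNat, n.2.toNat) else 0

/-- The embedding of index pairs. -/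
def castZ (a : ℕ × ℕ) : ℤ × ℤ := ((a.1 : ℤ), (a.2 : ℤ))

theorem castZ_inj : Function.Injective castZ := by
  rintro ⟨a, b⟩ ⟨c, d⟩ h
  simpa [castZ] using h

theorem extZ_castZ (h : Coef) (a : ℕ × ℕ) : extZ h (castZ a) = h a := by
  simp [extZ, castZ]

theorem extZ_not_range (h : Coef) (n : ℤ × ℤ) (hn : n ∉ Set.range castZ) : extZ h n = 0 := by
  unfold extZ
  rw [if_neg]
  rintro ⟨h1, h2⟩
  apply hn
  refine ⟨(n.1.toNat, n.2.toNat), ?_⟩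
  simp [castZ, h1, h2]

theorem tsum_extZ (h : Coef) : ∑' n, ‖extZ h n‖ ^ 2 = ∑' a, ‖h a‖ ^ 2 := by
  rw [← castZ_inj.tsum_eq (f := fun n => ‖extZ h n‖ ^ 2)]
  · simp [extZ_castZ]
  · intro n hn
    by_contra hc
    apply hn
    simp [extZ_not_range h n hc]

theorem summable_extZ (h : Coef) : Summable (fun n => ‖extZ h n‖ ^ 2) ↔ MemH2 h := by
  rw [← castZ_inj.summable_iff (f := fun n => ‖extZ h n‖ ^ 2)]
  · simp [extZ_castZ, MemH2, Function.comp_def]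
  · intro n hn
    simp [extZ_not_range h n hn]

/-- The box of exponents. -/
abbrev box (N M : ℕ) : Finset (ℕ × ℕ) := Finset.range (N + 1) ×ˢ Finset.range (M + 1)

theorem extZ_pmul (q h : Coef) (N M : ℕ) (hq : ∀ a b : ℕ, q (a, b) ≠ 0 → a ≤ N ∧ b ≤ M)
    (n : ℤ × ℤ) :
    extZ (pmul q h) n = ∑ a ∈ box N M, q a * extZ h (n - castZ a) := by
  by_cases hn : n ∈ Set.range castZ
  · obtain ⟨⟨j, k⟩, rfl⟩ := hn
    rw [extZ_castZ]
    have e1 : pmul q h (j, k) = ∑ a ∈ box j k, q a * extZ h (castZ (j, k) - castZ a) := by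
      rw [Finset.sum_product]
      unfold pmul
      refine Finset.sum_congr rfl fun a ha => Finset.sum_congr rfl fun b hb => ?_
      simp only [Finset.mem_range] at ha hb
      have : castZ (j, k) - castZ (a, b) = castZ (j - a, k - b) := by
        simp only [castZ, Prod.mk_sub_mk]
        congr 1 <;> omega
      rw [this, extZ_castZ]
    rw [e1]
    have hb : ∀ A B : ℕ × ℕ, A ≤ B → box A.1 A.2 ⊆ box B.1 B.2 := by
      rintro ⟨_, _⟩ ⟨_, _⟩ ⟨h1, h2⟩
      apply Finset.product_subset_product <;> apply Finset.range_mono <;> simpa using by assumption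
    have s1 := Finset.sum_subset (f := fun a => q a * extZ h (castZ (j, k) - castZ a))
      (hb (j, k) (j + N, k + M) ⟨by simp, by simp⟩) ?_
    have s2 := Finset.sum_subset (f := fun a => q a * extZ h (castZ (j, k) - castZ a))
      (hb (N, M) (j + N, k + M) ⟨by simp, by simp⟩) ?_
    · exact s1.trans s2.symm
    · rintro ⟨a, b⟩ - hab
      by_cases hz : q (a, b) = 0
      · simp [hz]
      · exfalso; apply hab
        have := hq a b hz
        simp only [Finset.mem_product, Finset.mem_range]; omega
    · rintro ⟨a, b⟩ - hab
      have : extZ h (castZ (j, k) - castZ (a, b)) = 0 := by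
        unfold extZ
        rw [if_neg]
        simp only [Finset.mem_product, Finset.mem_range] at hab
        simp only [castZ, Prod.mk_sub_mk]; omega
      simp [this]
  · rw [extZ_not_range _ _ hn]
    symm
    apply Finset.sum_eq_zero
    rintro ⟨a, b⟩ -
    rw [extZ_not_range, mul_zero]
    rintro ⟨⟨c, d⟩, hcd⟩
    apply hn
    refine ⟨(c + a, d + b), ?_⟩
    have := eq_sub_iff_add_eq.1 hcd
    rw [← this]
    simp [castZ]

/-- Correlations. -/
def corr (H : ℤ × ℤ → ℂ) (s t : ℤ × ℤ) : ℂ := ∑' n, H (n - s) * (starRingEnd ℂ) (H (n - t))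

theorem corr_shift (H : ℤ × ℤ → ℂ) (s t s' t' : ℤ × ℤ) (h : s - t = s' - t') :
    corr H s t = corr H s' t' := by
  unfold corr
  rw [← (Equiv.addRight (s' - s)).tsum_eq
    (fun n => H (n - s') * (starRingEnd ℂ) (H (n - t')))]
  refine tsum_congr fun n => ?_
  have e1 : (Equiv.addRight (s' - s)) n - s' = n - s := by
    simp only [Equiv.coe_addRight]; abel
  have e2 : (Equiv.addRight (s' - s)) n - t' = n - t := by
    have : t' = s' - s + t := by
      rw [sub_add, h]; abel
    rw [this]; simp only [Equiv.coe_addRight]; abel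
  rw [e1, e2]

theorem summable_corr (H : ℤ × ℤ → ℂ) (hH : Summable fun n => ‖H n‖ ^ 2) (s t : ℤ × ℤ) :
    Summable fun n => H (n - s) * (starRingEnd ℂ) (H (n - t)) := by
  have hs : ∀ s, Summable fun n => ‖H (n - s)‖ ^ 2 := fun s =>
    (Equiv.subRight s).summable_iff (f := fun n => ‖H n‖ ^ 2) |>.2 hH
  refine Summable.of_norm_bounded ((hs s).add (hs t)) fun n => ?_
  rw [norm_mul, RCLike.norm_conj]
  nlinarith [sq_nonneg (‖H (n - s)‖ - ‖H (n - t)‖), sq_nonneg (‖H (n - s)‖ + ‖H (n - t)‖)]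

theorem hasSum_norm (q : Coef) (H : ℤ × ℤ → ℂ) (hH : Summable fun n => ‖H n‖ ^ 2)
    (S : Finset (ℕ × ℕ)) :
    HasSum (fun n => ((‖∑ a ∈ S, q a * H (n - castZ a)‖ ^ 2 : ℝ) : ℂ))
      (∑ a ∈ S, ∑ b ∈ S, q a * (starRingEnd ℂ) (q b) * corr H (castZ a) (castZ b)) := by
  have := hasSum_sum (s := S) fun a (_ : a ∈ S) => hasSum_sum (s := S) fun b (_ : b ∈ S) =>
    (summable_corr H hH (castZ a) (castZ b)).hasSum.mul_left (q a * (starRingEnd ℂ) (q b))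
  have hfun : ∀ F G : ℤ × ℤ → ℂ, ∀ s : ℂ, HasSum G s → (∀ n, F n = G n) → HasSum F s := by
    intro F G s hG hFG
    rwa [funext hFG]
  refine hfun _ _ _ this fun n => ?_
  rw [Complex.ofReal_pow, ← Complex.mul_conj', map_sum, Finset.sum_mul_sum]
  refine Finset.sum_congr rfl fun a _ => Finset.sum_congr rfl fun b _ => ?_
  rw [map_mul]; ring

theorem memH2_pmul (q h : Coef) (hh : MemH2 h) (N M : ℕ)
    (hq : ∀ a b : ℕ, q (a, b) ≠ 0 → a ≤ N ∧ b ≤ M) : MemH2 (pmul q h) := by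
  rw [← summable_extZ] at hh ⊢
  simp only [extZ_pmul q h N M hq]
  exact Complex.summable_ofReal.1 (hasSum_norm q _ hh (box N M)).summable

theorem reflPoly_bound (q : Coef) (N M a b : ℕ) (h : reflPoly N M q (a, b) ≠ 0) :
    a ≤ N ∧ b ≤ M := by
  unfold reflPoly at h
  by_contra hc
  exact h (if_neg hc)

theorem norm_refl (q h : Coef) (hh : MemH2 h) (N M : ℕ)
    (hq : ∀ a b : ℕ, q (a, b) ≠ 0 → a ≤ N ∧ b ≤ M) :
    ∑' a, ‖pmul (reflPoly N M q) h a‖ ^ 2 = ∑' a, ‖pmul q h a‖ ^ 2 := by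
  rw [← tsum_extZ, ← tsum_extZ]
  simp only [extZ_pmul q h N M hq, extZ_pmul _ h N M (reflPoly_bound q N M)]
  rw [← summable_extZ] at hh
  apply Complex.ofReal_injective
  rw [Complex.ofReal_tsum, Complex.ofReal_tsum, (hasSum_norm _ _ hh _).tsum_eq,
    (hasSum_norm _ _ hh _).tsum_eq]
  have hmem : ∀ a ∈ box N M, (N - a.1, M - a.2) ∈ box N M := by
    intro a _; simp only [Finset.mem_product, Finset.mem_range]; omega
  have hinv : ∀ a ∈ box N M, (N - (N - a.1), M - (M - a.2)) = a := by
    rintro ⟨a, b⟩ hab; simp only [Finset.mem_product, Finset.mem_range] at hab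
    ext <;> simp <;> omega
  rw [Finset.sum_comm]
  refine Finset.sum_bij' (fun a _ => (N - a.1, M - a.2)) (fun a _ => (N - a.1, M - a.2))
    hmem hmem hinv hinv fun a ha => ?_
  refine Finset.sum_bij' (fun a _ => (N - a.1, M - a.2)) (fun a _ => (N - a.1, M - a.2))
    hmem hmem hinv hinv fun b hb => ?_
  simp only [Finset.mem_product, Finset.mem_range] at ha hb
  rw [corr_shift (extZ h) (castZ b) (castZ a) (castZ (N - a.1, M - a.2)) (castZ (N - b.1, M - b.2))]
  · unfold reflPoly
    rw [if_pos (by omega), if_pos (by omega), Complex.conj_conj]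
    ring
  · simp only [castZ, Prod.mk_sub_mk]
    congr 1 <;> omega

theorem inPn_bound (n : ℕ) (p : Coef) (hp : inPn n p) :
    ∃ N M : ℕ, ∀ a b : ℕ, p (a, b) ≠ 0 → a ≤ N ∧ b ≤ M := by
  refine ⟨(Finset.range (n + 1)).sup fun k => (chi k).1,
    (Finset.range (n + 1)).sup fun k => (chi k).2, fun a b hab => ?_⟩
  obtain ⟨k, hk, hc⟩ := hp _ hab
  have hk' : k ∈ Finset.range (n + 1) := by simp; omega
  have h1 := Finset.le_sup (f := fun k => (chi k).1) hk'
  have h2 := Finset.le_sup (f := fun k => (chi k).2) hk'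
  rw [hc] at h1 h2
  exact ⟨h1, h2⟩

/-- Squared norm. -/
def nsq (F : Coef) : ℝ := ∑' a, ‖F a‖ ^ 2

theorem nsq_sub_one (F : Coef) (hF : MemH2 F) :
    nsq (F - oneH) = nsq F + (1 - 2 * (F (0, 0)).re) := by
  unfold nsq
  have h2 : HasSum (fun a : ℕ × ℕ => if a = (0, 0) then (1 - 2 * (F (0, 0)).re) else 0)
      (1 - 2 * (F (0, 0)).re) := hasSum_ite_eq _ _
  rw [← (hF.hasSum.add h2).tsum_eq]
  refine tsum_congr fun a => ?_
  by_cases ha : a = (0, 0)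
  · subst ha
    simp only [oneH, Pi.sub_apply, if_true, Complex.sq_norm, Complex.normSq_apply,
      Complex.sub_re, Complex.sub_im, Complex.one_re, Complex.one_im]
    ring
  · simp [oneH, ha]

theorem nsq_smul (c : ℂ) (F : Coef) : nsq (c • F) = ‖c‖ ^ 2 * nsq F := by
  unfold nsq
  rw [← tsum_mul_left]
  simp [mul_pow]

theorem nsq_mid (F U : Coef) (hF : MemH2 F) (hU : MemH2 U) :
    nsq ((1 / 2 : ℂ) • (F + U)) = nsq F / 2 + nsq U / 2 - nsq (F - U) / 4 := by
  have pt : ∀ x y : ℂ, ‖(1 / 2 : ℂ) * (x + y)‖ ^ 2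
      = ‖x‖ ^ 2 / 2 + ‖y‖ ^ 2 / 2 - ‖x - y‖ ^ 2 / 4 := by
    intro x y
    rw [norm_mul, mul_pow]
    simp only [Complex.sq_norm, Complex.normSq_apply, Complex.sub_re, Complex.sub_im,
      Complex.add_re, Complex.add_im]
    norm_num
    ring
  have hs : Summable fun a => ‖(F - U) a‖ ^ 2 := by
    refine Summable.of_nonneg_of_le (fun _ => by positivity) (fun a => ?_)
      ((hF.mul_left 2).add (hU.mul_left 2))
    have := norm_sub_le (F a) (U a)
    have h0 := norm_nonneg (F a - U a)
    simp only [Pi.sub_apply]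
    nlinarith [sq_nonneg (‖F a‖ - ‖U a‖)]
  have := ((hF.hasSum.div_const 2).add (hU.hasSum.div_const 2)).sub (hs.hasSum.div_const 4)
  unfold nsq
  rw [← this.tsum_eq]
  refine tsum_congr fun a => ?_
  simp only [Pi.smul_apply, Pi.add_apply, smul_eq_mul, Pi.sub_apply]
  exact pt _ _

theorem Hnorm_le_iff (F G : Coef) : Hnorm F ≤ Hnorm G ↔ nsq F ≤ nsq G := by
  unfold Hnorm nsq
  exact Real.sqrt_le_sqrt_iff (tsum_nonneg fun _ => by positivity)

theorem inPn_smul {n : ℕ} {p : Coef} (hp : inPn n p) (c : ℂ) : inPn n (c • p) := by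
  intro ab h
  apply hp
  intro h0
  apply h
  simp [h0]

theorem inPn_add {n : ℕ} {p r : Coef} (hp : inPn n p) (hr : inPn n r) : inPn n (p + r) := by
  intro ab h
  by_cases h0 : p ab = 0
  · apply hr
    intro h1
    apply h
    simp [h0, h1]
  · exact hp _ h0

/-- Pythagorean form of the minimisation. -/
theorem opa_le {f p r : Coef} {n : ℕ} (hf : ∀ r, inPn n r → MemH2 (pmul r f))
    (hp : IsOPA f n p) (hr : inPn n r) :
    nsq (pmul p f) - 2 * (p (0, 0) * f (0, 0)).re
      ≤ nsq (pmul r f) - 2 * (r (0, 0) * f (0, 0)).re := by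
  have h := hp.2 r hr
  rw [Hnorm_le_iff, nsq_sub_one _ (hf _ hp.1), nsq_sub_one _ (hf _ hr),
    pmul_zero_zero, pmul_zero_zero] at h
  linarith


/-- Let `q` be a polynomial of bidegree `(N, M)` whose reflection is nonzero
at the origin, let `f = q·f̃` with `f(0) ≠ 0`. Then for every `n` there is a constant `c` with
`p_n*[f] = c · p_n*[q⃖·f̃]`. -/
theorem statement5 (ftilde q : Coef) (hft : MemH2 ftilde) (N M : ℕ)
    (hq : HasBidegree q N M) (hrefl0 : reflPoly N M q (0, 0) ≠ 0)
    (hf0 : pmul q ftilde (0, 0) ≠ 0) (n : ℕ) (p p' : Coef)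
    (hp : IsOPA (pmul q ftilde) n p) (hp' : IsOPA (pmul (reflPoly N M q) ftilde) n p') :
    ∃ c : ℂ, p = c • p' := by
  have hft0 : ftilde (0, 0) ≠ 0 := by
    rw [pmul_zero_zero] at hf0
    exact right_ne_zero_of_mul hf0
  have hg0 : pmul (reflPoly N M q) ftilde (0, 0) ≠ 0 := by
    rw [pmul_zero_zero]
    exact mul_ne_zero hrefl0 hft0
  have hmem : ∀ r, inPn n r → MemH2 (pmul r ftilde) := by
    intro r hr
    obtain ⟨A, B, hAB⟩ := inPn_bound n r hr
    exact memH2_pmul r _ hft A B hAB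
  have hE : ∀ r, inPn n r →
      nsq (pmul r (pmul (reflPoly N M q) ftilde)) = nsq (pmul r (pmul q ftilde)) := by
    intro r hr
    rw [pmul_left_comm, pmul_left_comm r q]
    exact norm_refl q _ (hmem r hr) N M hq.1
  have hmf : ∀ r, inPn n r → MemH2 (pmul r (pmul q ftilde)) := by
    intro r hr
    rw [pmul_left_comm]
    exact memH2_pmul q _ (hmem r hr) N M hq.1
  have hmg : ∀ r, inPn n r → MemH2 (pmul r (pmul (reflPoly N M q) ftilde)) := by
    intro r hr
    rw [pmul_left_comm]
    exact memH2_pmul _ _ (hmem r hr) N M (reflPoly_bound q N M)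
  generalize pmul q ftilde = f at *
  generalize pmul (reflPoly N M q) ftilde = g at *
  set c : ℂ := (starRingEnd ℂ) (f (0, 0) / g (0, 0)) with hc
  have hc0 : c ≠ 0 := by
    rw [hc]
    simpa using ⟨hf0, hg0⟩
  have hcf : c * f (0, 0) = ((‖c‖ ^ 2 : ℝ) : ℂ) * g (0, 0) := by
    rw [Complex.ofReal_pow, ← Complex.mul_conj', hc, Complex.conj_conj, mul_assoc,
      div_mul_cancel₀ _ hg0]
  refine ⟨c, ?_⟩
  have hu : inPn n (c • p') := inPn_smul hp'.1 c
  set m : Coef := (1 / 2 : ℂ) • (p + c • p') with hm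
  have hmP : inPn n m := inPn_smul (inPn_add hp.1 hu) _
  have h1 := opa_le hmf hp hmP
  have h2 := opa_le hmg hp' (inPn_smul hmP c⁻¹)
  rw [hE _ hp'.1, hE _ (inPn_smul hmP _), pmul_smul_left, nsq_smul] at h2
  have hcpos : 0 < ‖c‖ ^ 2 := by positivity
  have h3 := mul_le_mul_of_nonneg_left h2 hcpos.le
  have e1 : ∀ x : ℂ, ‖c‖ ^ 2 * (x * g (0, 0)).re = (c * x * f (0, 0)).re := by
    intro x
    rw [← Complex.re_ofReal_mul]
    congr 1
    linear_combination (-x) * hcf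
  have e2 : ‖c‖ ^ 2 * (‖c⁻¹‖ ^ 2 * nsq (pmul m f)) = nsq (pmul m f) := by
    rw [norm_inv]
    field_simp
  have e3 := e1 (p' (0, 0))
  have e4 := e1 ((c⁻¹ • m) (0, 0))
  rw [Pi.smul_apply, smul_eq_mul, mul_inv_cancel_left₀ hc0] at e4
  rw [Pi.smul_apply, smul_eq_mul] at h3
  have e5 := nsq_mid _ _ (hmf _ hp.1) (hmf _ hu)
  rw [← pmul_add_left, ← pmul_smul_left, ← hm, ← pmul_sub_left, pmul_smul_left c p' f,
    nsq_smul] at e5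
  have e6 : (m (0, 0) * f (0, 0)).re
      = ((p (0, 0) * f (0, 0)).re + (c * p' (0, 0) * f (0, 0)).re) / 2 := by
    rw [eq_div_iff two_ne_zero, ← Complex.add_re, mul_comm, ← Complex.re_ofReal_mul]
    congr 1
    simp only [hm, Pi.smul_apply, Pi.add_apply, smul_eq_mul]
    push_cast
    ring
  have hle : nsq (pmul (p - c • p') f) ≤ 0 := by
    nlinarith
  have hd : inPn n (p - c • p') := by
    have := inPn_add hp.1 (inPn_smul hu (-1))
    rwa [neg_one_smul, ← sub_eq_add_neg] at this
  have hz : pmul (p - c • p') f = 0 := by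
    have hs := hmf _ hd
    have h0 : nsq (pmul (p - c • p') f) = 0 :=
      le_antisymm hle (tsum_nonneg fun _ => by positivity)
    have hs0 := hs.hasSum
    change HasSum _ (nsq (pmul (p - c • p') f)) at hs0
    rw [h0, hasSum_zero_iff_of_nonneg (fun _ => by positivity)] at hs0
    funext a
    have := congrFun hs0 a
    simpa using this
  exact sub_eq_zero.1 (pmul_eq_zero hz hf0)
end
end

section
/- Let q be a two-variable polynomial of bidegree (N, M) with reflection q⃖, let u, v be any two-variable polynomials, and let g ∈ H²(𝔻²). Then ⟨u·q·g, v·q·g⟩ = ⟨u·q⃖·g, v·q⃖·g⟩; in particular, ‖q·g‖ = ‖q⃖·g‖ and ‖q⃖‖ = ‖q‖. -/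
noncomputable section

open Finset

/-- Multiplication by the monomial with exponent `s`. -/
def shiftC (s : ℕ × ℕ) (f : Coef) : Coef := fun x => if s ≤ x then f (x - s) else 0

theorem pmul_expand (p f : Coef) (S : Finset (ℕ × ℕ)) (hS : ∀ x, p x ≠ 0 → x ∈ S) (x : ℕ × ℕ) :
    pmul p f x = ∑ s ∈ S, p s * shiftC s f x := by
  have h1 : pmul p f x = ∑ s ∈ Finset.Iic x, p s * shiftC s f x := by
    have : (Finset.Iic x) = range (x.1 + 1) ×ˢ range (x.2 + 1) := by
      ext ⟨a, b⟩
      simp [Prod.le_def]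
    rw [this, Finset.sum_product]
    unfold pmul
    refine Finset.sum_congr rfl fun a ha => Finset.sum_congr rfl fun b hb => ?_
    have hle : (a, b) ≤ x := by
      simp only [Finset.mem_range] at ha hb
      exact ⟨by simp only; omega, by simp only; omega⟩
    simp only [shiftC, if_pos hle]
    rfl
  rw [h1]
  have h2 : ∑ s ∈ Finset.Iic x, p s * shiftC s f x
      = ∑ s ∈ Finset.Iic x ∪ S, p s * shiftC s f x := by
    refine Finset.sum_subset Finset.subset_union_left fun s _ hs => ?_
    rw [Finset.mem_Iic] at hs
    simp [shiftC, hs]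
  rw [h2]
  symm
  refine Finset.sum_subset Finset.subset_union_right fun s _ hs => ?_
  have : p s = 0 := by
    by_contra h
    exact hs (hS s h)
  simp [this]

theorem shiftC_shiftC (s t : ℕ × ℕ) (f : Coef) : shiftC s (shiftC t f) = shiftC (s + t) f := by
  funext x
  obtain ⟨x1, x2⟩ := x
  obtain ⟨s1, s2⟩ := s
  obtain ⟨t1, t2⟩ := t
  simp only [shiftC, Prod.le_def, Prod.fst_sub, Prod.snd_sub, Prod.fst_add, Prod.snd_add]
  by_cases h : s1 + t1 ≤ x1 ∧ s2 + t2 ≤ x2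
  · rw [if_pos h, if_pos (by omega), if_pos (by omega)]
    congr 1
    ext <;> simp <;> omega
  · rw [if_neg h]
    by_cases h' : s1 ≤ x1 ∧ s2 ≤ x2
    · rw [if_pos h', if_neg (by omega)]
    · rw [if_neg h']

theorem shiftC_add_self (r x : ℕ × ℕ) (f : Coef) : shiftC r f (r + x) = f x := by
  simp [shiftC]

theorem shiftC_support (r : ℕ × ℕ) (f : Coef) (x : ℕ × ℕ) (h : shiftC r f x ≠ 0) :
    x ∈ Set.range (fun y => r + y) := by
  unfold shiftC at h
  split_ifs at h with hr
  · exact ⟨x - r, add_tsub_cancel_of_le hr⟩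
  · exact absurd rfl h

theorem memH2_shiftC (r : ℕ × ℕ) (f : Coef) (hf : MemH2 f) : MemH2 (shiftC r f) := by
  unfold MemH2
  have hi : Function.Injective (fun y : ℕ × ℕ => r + y) := add_right_injective r
  refine (hi.summable_iff ?_).1 ?_
  · intro x hx
    have : shiftC r f x = 0 := by
      by_contra h
      exact hx (shiftC_support r f x h)
    simp [this]
  · simp only [Function.comp_def, shiftC_add_self]
    exact hf

theorem hinner_shiftC (r : ℕ × ℕ) (f g : Coef) :
    Hinner (shiftC r f) (shiftC r g) = Hinner f g := by
  unfold Hinner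
  have hi : Function.Injective (fun y : ℕ × ℕ => r + y) := add_right_injective r
  rw [← hi.tsum_eq]
  · simp [shiftC_add_self]
  · intro x hx
    exact shiftC_support r f x (left_ne_zero_of_mul hx)

theorem summable_inner (f g : Coef) (hf : MemH2 f) (hg : MemH2 g) :
    Summable fun x => f x * (starRingEnd ℂ) (g x) := by
  refine Summable.of_norm_bounded (hf.add hg) fun x => ?_
  rw [norm_mul, RCLike.norm_conj]
  nlinarith [sq_nonneg (‖f x‖ - ‖g x‖), sq_nonneg (‖f x‖), sq_nonneg (‖g x‖)]

theorem hinner_sum {ι : Type*} (S T : Finset ι) (c d : ι → ℂ) (F G : ι → Coef)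
    (hF : ∀ i, MemH2 (F i)) (hG : ∀ i, MemH2 (G i)) :
    Hinner (fun x => ∑ i ∈ S, c i * F i x) (fun x => ∑ j ∈ T, d j * G j x)
      = ∑ i ∈ S, ∑ j ∈ T, c i * (starRingEnd ℂ) (d j) * Hinner (F i) (G j) := by
  unfold Hinner
  have : ∀ i j, Summable fun x => c i * (starRingEnd ℂ) (d j) * (F i x * (starRingEnd ℂ) (G j x)) :=
    fun i j => (summable_inner _ _ (hF i) (hG j)).mul_left _
  have h2 : ∀ i ∈ S, ∑ j ∈ T, c i * (starRingEnd ℂ) (d j) * ∑' x, F i x * (starRingEnd ℂ) (G j x)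
      = ∑' x, ∑ j ∈ T, c i * (starRingEnd ℂ) (d j) * (F i x * (starRingEnd ℂ) (G j x)) := by
    intro i _
    rw [Summable.tsum_finsetSum fun j _ => this i j]
    exact Finset.sum_congr rfl fun j _ => tsum_mul_left.symm
  rw [Finset.sum_congr rfl h2, ← Summable.tsum_finsetSum fun i _ => summable_sum fun j _ => this i j]
  refine tsum_congr fun x => ?_
  rw [map_sum, Finset.sum_mul_sum]
  refine Finset.sum_congr rfl fun i _ => Finset.sum_congr rfl fun j _ => ?_
  rw [map_mul]
  ring

theorem pmul_pmul_expand (p q f : Coef) (S T : Finset (ℕ × ℕ)) (hS : ∀ x, p x ≠ 0 → x ∈ S)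
    (hT : ∀ x, q x ≠ 0 → x ∈ T) :
    pmul p (pmul q f) =
      fun x => ∑ i ∈ S ×ˢ T, (p i.1 * q i.2) * shiftC (i.1 + i.2) f x := by
  funext x
  rw [pmul_expand p _ S hS, Finset.sum_product]
  refine Finset.sum_congr rfl fun s _ => ?_
  have : shiftC s (pmul q f) x = ∑ t ∈ T, q t * shiftC (s + t) f x := by
    simp_rw [← shiftC_shiftC]
    unfold shiftC
    split_ifs with h
    · exact pmul_expand q f T hT _
    · simp
  rw [this, Finset.mul_sum]
  exact Finset.sum_congr rfl fun t _ => by ring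

theorem sum_reflect (D : ℕ × ℕ) (F : ℕ × ℕ → ℂ) :
    ∑ b ∈ Finset.Iic D, F b = ∑ b ∈ Finset.Iic D, F (D - b) := by
  refine Finset.sum_nbij' (fun b => D - b) (fun b => D - b) ?_ ?_ ?_ ?_ ?_
  · intro b _
    simp
  · intro b _
    simp
  · intro b hb
    exact tsub_tsub_cancel_of_le (Finset.mem_Iic.1 hb)
  · intro b hb
    exact tsub_tsub_cancel_of_le (Finset.mem_Iic.1 hb)
  · intro b hb
    rw [tsub_tsub_cancel_of_le (Finset.mem_Iic.1 hb)]

theorem reflPoly_sub (D b : ℕ × ℕ) (q : Coef) (hb : b ≤ D) :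
    reflPoly D.1 D.2 q (D - b) = (starRingEnd ℂ) (q b) := by
  unfold reflPoly
  rw [if_pos (by simp)]
  congr 2
  have := tsub_tsub_cancel_of_le hb
  exact this

theorem hinner_refl (q u v g : Coef) (D : ℕ × ℕ) (hq : ∀ x, q x ≠ 0 → x ≤ D)
    (hu : IsPoly2 u) (hv : IsPoly2 v) (hg : MemH2 g) :
    Hinner (pmul u (pmul q g)) (pmul v (pmul q g)) =
      Hinner (pmul u (pmul (reflPoly D.1 D.2 q) g)) (pmul v (pmul (reflPoly D.1 D.2 q) g)) := by
  have hq1 : ∀ x, q x ≠ 0 → x ∈ Finset.Iic D := fun x hx => Finset.mem_Iic.2 (hq x hx)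
  have hr1 : ∀ x, reflPoly D.1 D.2 q x ≠ 0 → x ∈ Finset.Iic D := by
    intro x hx
    unfold reflPoly at hx
    split_ifs at hx with h
    · exact Finset.mem_Iic.2 h
    · exact absurd rfl hx
  have hu1 : ∀ x, u x ≠ 0 → x ∈ hu.toFinset := fun x hx => (Set.Finite.mem_toFinset _).2 hx
  have hv1 : ∀ x, v x ≠ 0 → x ∈ hv.toFinset := fun x hx => (Set.Finite.mem_toFinset _).2 hx
  rw [pmul_pmul_expand u q g _ _ hu1 hq1, pmul_pmul_expand v q g _ _ hv1 hq1,
    pmul_pmul_expand u _ g _ _ hu1 hr1, pmul_pmul_expand v _ g _ _ hv1 hr1,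
    hinner_sum _ _ _ _ _ _ (fun i => memH2_shiftC _ _ hg) (fun i => memH2_shiftC _ _ hg),
    hinner_sum _ _ _ _ _ _ (fun i => memH2_shiftC _ _ hg) (fun i => memH2_shiftC _ _ hg)]
  simp_rw [Finset.sum_product]
  refine Finset.sum_congr rfl fun a _ => ?_
  rw [Finset.sum_comm]
  conv_rhs => rw [Finset.sum_comm]
  refine Finset.sum_congr rfl fun c _ => ?_
  conv_rhs => rw [sum_reflect]
  rw [Finset.sum_comm]
  refine Finset.sum_congr rfl fun d hd => ?_
  conv_rhs => rw [sum_reflect]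
  refine Finset.sum_congr rfl fun b hb => ?_
  rw [Finset.mem_Iic] at hb hd
  rw [reflPoly_sub D b q hb, reflPoly_sub D d q hd]
  have key : Hinner (shiftC (a + (D - d)) g) (shiftC (c + (D - b)) g)
      = Hinner (shiftC (a + b) g) (shiftC (c + d) g) := by
    rw [← hinner_shiftC (b + d), ← hinner_shiftC D (shiftC (a + b) g)]
    simp_rw [shiftC_shiftC]
    obtain ⟨e, rfl⟩ := exists_add_of_le hb
    have h1 : b + d + (a + (b + e - d)) = b + e + (a + b) := by
      have := tsub_add_cancel_of_le hd
      generalize b + e - d = t at this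
      calc b + d + (a + t) = b + a + (t + d) := by abel
        _ = _ := by rw [this]; abel
    have h2 : b + d + (c + (b + e - b)) = b + e + (c + d) := by
      rw [add_tsub_cancel_left]; abel
    rw [h1, h2]
  rw [key]
  simp only [map_mul, Complex.conj_conj]
  ring

theorem isPoly2_oneH : IsPoly2 oneH := by
  refine (Set.finite_singleton ((0, 0) : ℕ × ℕ)).subset fun x hx => ?_
  by_contra h
  exact hx (if_neg h)

theorem memH2_oneH : MemH2 oneH := by
  refine summable_of_ne_finset_zero (s := {(0, 0)}) fun x hx => ?_
  rw [Finset.mem_singleton] at hx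
  simp [oneH, hx]

theorem pmul_oneH_left (f : Coef) : pmul oneH f = f := by
  funext x
  rw [pmul_expand oneH f {(0, 0)}]
  · have : ((0, 0) : ℕ × ℕ) ≤ x := ⟨Nat.zero_le _, Nat.zero_le _⟩
    simp only [Finset.sum_singleton, oneH, shiftC, this, if_true, one_mul]
    rfl
  · intro x hx
    by_contra h
    rw [Finset.mem_singleton] at h
    exact hx (if_neg h)

theorem pmul_oneH_right (f : Coef) : pmul f oneH = f := by
  funext ⟨x, y⟩
  unfold pmul
  rw [Finset.sum_eq_single x, Finset.sum_eq_single y]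
  · simp [oneH]
  · intro b hb hne
    have : y - b ≠ 0 := by rw [Finset.mem_range] at hb; simp only at hb; omega
    simp [oneH, this]
  · simp
  · intro a ha hne
    have : x - a ≠ 0 := by rw [Finset.mem_range] at ha; simp only at ha; omega
    simp [oneH, this]
  · simp

theorem hnorm_eq (f : Coef) : Hnorm f = Real.sqrt (Hinner f f).re := by
  have : Hinner f f = ((∑' x, ‖f x‖ ^ 2 : ℝ) : ℂ) := by
    unfold Hinner
    rw [Complex.ofReal_tsum]
    refine tsum_congr fun x => ?_
    rw [Complex.mul_conj, Complex.normSq_eq_norm_sq]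
  rw [this, Complex.ofReal_re]
  rfl

/-- For a polynomial `q` of bidegree `(N, M)`, any polynomials `u, v`, and any
`g ∈ H²(𝔻²)`: `⟨u q g, v q g⟩ = ⟨u q⃖ g, v q⃖ g⟩`; in particular `‖q g‖ = ‖q⃖ g‖` and
`‖q⃖‖ = ‖q‖`. -/
theorem statement6 (q u v g : Coef) (N M : ℕ) (hq : HasBidegree q N M)
    (hu : IsPoly2 u) (hv : IsPoly2 v) (hg : MemH2 g) :
    Hinner (pmul u (pmul q g)) (pmul v (pmul q g)) =
      Hinner (pmul u (pmul (reflPoly N M q) g)) (pmul v (pmul (reflPoly N M q) g)) ∧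
    Hnorm (pmul q g) = Hnorm (pmul (reflPoly N M q) g) ∧
    Hnorm (reflPoly N M q) = Hnorm q := by
  have hq' : ∀ x, q x ≠ 0 → x ≤ (N, M) := fun x hx => hq.1 x.1 x.2 hx
  have hn : ∀ g, MemH2 g → Hnorm (pmul q g) = Hnorm (pmul (reflPoly N M q) g) := by
    intro g hg
    have h := hinner_refl q oneH oneH g (N, M) hq' isPoly2_oneH isPoly2_oneH hg
    simp only [pmul_oneH_left] at h
    rw [hnorm_eq, hnorm_eq, h]
  refine ⟨hinner_refl q u v g (N, M) hq' hu hv hg, hn g hg, ?_⟩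
  have h := hn oneH memH2_oneH
  rw [pmul_oneH_right, pmul_oneH_right] at h
  exact h.symm
end
end

section
/- Let f ∈ H²(𝔻²) with f(0) ≠ 0. Then f is weakly inner (⟨f, z^a w^b f⟩ = 0 for all (a,b) ≠ (0,0)) if and only if every optimal polynomial approximant to 1/f is the same constant: p_n*[f] = p_0*[f] = conj(f(0))/‖f‖² for all n ≥ 0. -/
noncomputable section

open Finset

theorem chi_surj (s : ℕ) : ∀ j, j ≤ s → ∃ n, chi n = (s - j, j) := by
  induction s with
  | zero => intro j hj; exact ⟨0, by simp [chi]; omega⟩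
  | succ s ih =>
    intro j
    induction j with
    | zero =>
      intro _
      obtain ⟨n, hn⟩ := ih s le_rfl
      exact ⟨n + 1, by simp [chi, hn]⟩
    | succ j ihj =>
      intro hj
      obtain ⟨n, hn⟩ := ihj (by omega)
      refine ⟨n + 1, ?_⟩
      have : ¬ (s + 1 - j = 0) := by omega
      simp only [chi, hn, this, if_false, Prod.mk.injEq, and_true]
      omega

theorem chi_surj' (ab : ℕ × ℕ) : ∃ n, chi n = ab := by
  obtain ⟨n, hn⟩ := chi_surj (ab.1 + ab.2) ab.2 (by omega)
  exact ⟨n, by rw [hn]; ext <;> simp⟩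

theorem pmul_mono (ab : ℕ × ℕ) (f : Coef) (jk : ℕ × ℕ) :
    pmul (mono ab) f jk =
      if ab.1 ≤ jk.1 ∧ ab.2 ≤ jk.2 then f (jk.1 - ab.1, jk.2 - ab.2) else 0 := by
  obtain ⟨a, b⟩ := ab
  obtain ⟨j, k⟩ := jk
  simp only [pmul, mono, Prod.mk.injEq, ite_and, ite_mul, one_mul, zero_mul]
  have : ∀ x, (∑ y ∈ range (k + 1), if x = a then (if y = b then f (j - x, k - y) else 0) else 0)
      = if x = a then (if b ≤ k then f (j - x, k - b) else 0) else 0 := by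
    intro x
    split_ifs <;> simp [Finset.sum_ite_eq'] <;> omega
  simp only [this, Finset.sum_ite_eq', mem_range, Nat.lt_succ_iff]

theorem pmul_mono_zero (f : Coef) : pmul (mono (0, 0)) f = f := by
  funext jk; simp [pmul_mono]

theorem memH2_shift (f : Coef) (hf : MemH2 f) (ab : ℕ × ℕ) : MemH2 (pmul (mono ab) f) := by
  unfold MemH2 at *
  have hinj : Function.Injective (fun jk : ℕ × ℕ => (jk.1 + ab.1, jk.2 + ab.2)) := by
    intro x y h
    simp only [Prod.mk.injEq] at h
    ext <;> omega
  refine (hinj.summable_iff ?_).1 ?_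
  · intro x hx
    rw [pmul_mono, if_neg]
    · simp
    · rintro ⟨h1, h2⟩
      exact hx ⟨(x.1 - ab.1, x.2 - ab.2), by ext <;> simp <;> omega⟩
  · refine hf.congr ?_
    intro jk
    simp [pmul_mono]

abbrev HH := lp (fun _ : ℕ × ℕ => ℂ) 2

theorem memlp_of (f : Coef) (hf : MemH2 f) : Memℓp (E := fun _ : ℕ × ℕ => ℂ) f 2 := by
  apply memℓp_gen
  simpa [MemH2] using hf

def shiftH (f : Coef) (hf : MemH2 f) (ab : ℕ × ℕ) : HH :=
  ⟨pmul (mono ab) f, memlp_of _ (memH2_shift f hf ab)⟩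

def oneHH : HH := lp.single 2 ((0, 0) : ℕ × ℕ) (1 : ℂ)

theorem oneHH_coe (jk : ℕ × ℕ) : (oneHH : HH) jk = oneH jk := by
  by_cases h : jk = (0, 0)
  · subst h; simp [oneHH, oneH]
  · simp [oneHH, oneH, h]

theorem Hnorm_eq (g : HH) : Hnorm (fun jk => g jk) = ‖g‖ := by
  unfold Hnorm
  have := lp.norm_rpow_eq_tsum (p := 2) (by norm_num) g
  simp at this
  rw [← this, Real.sqrt_sq (norm_nonneg _)]

theorem inner_eq (g h : HH) : inner ℂ g h = Hinner (fun jk => h jk) (fun jk => g jk) := by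
  rw [lp.inner_eq_tsum]
  rfl

theorem inner_one (g : HH) : inner ℂ g oneHH = (starRingEnd ℂ) (g (0, 0)) := by
  unfold oneHH
  rw [lp.inner_single_right]
  simp

def suppN (n : ℕ) : Finset (ℕ × ℕ) := (range (n + 1)).image chi

theorem mem_suppN {n : ℕ} {ab : ℕ × ℕ} : ab ∈ suppN n ↔ ∃ k ≤ n, chi k = ab := by
  simp [suppN]

theorem pmul_eq_sum (f : Coef) (hf : MemH2 f) (n : ℕ) (p : Coef) (hp : inPn n p) (jk : ℕ × ℕ) :
    pmul p f jk = (∑ ab ∈ suppN n, p ab • shiftH f hf ab : HH) jk := by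
  have h1 : (∑ ab ∈ suppN n, p ab • shiftH f hf ab : HH) jk
      = ∑ ab ∈ suppN n, p ab * pmul (mono ab) f jk := by
    rw [lp.coeFn_sum]
    simp [shiftH, Finset.sum_apply]
  rw [h1]
  simp only [pmul_mono, mul_ite, mul_zero]
  rw [← Finset.sum_filter]
  unfold pmul
  rw [← Finset.sum_product' (range (jk.1+1)) (range (jk.2+1))
    (fun a b => p (a, b) * f (jk.1 - a, jk.2 - b))]
  symm
  apply Finset.sum_subset
  · intro x hx
    simp at hx ⊢
    omega
  · intro x hx hx'
    have : p x = 0 := by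
      by_contra h
      apply hx'
      simp at hx ⊢
      exact ⟨mem_suppN.2 (hp x h), by omega, by omega⟩
    simp [this]

theorem norm_pmul (f : Coef) (hf : MemH2 f) (n : ℕ) (p : Coef) (hp : inPn n p) :
    Hnorm (pmul p f - oneH) = ‖(∑ ab ∈ suppN n, p ab • shiftH f hf ab : HH) - oneHH‖ := by
  rw [← Hnorm_eq]
  congr 1
  funext jk
  have := pmul_eq_sum f hf n p hp jk
  simp only [Pi.sub_apply, lp.coeFn_sub, oneHH_coe, this]

theorem pmul_inj (f p q : Coef) (hf0 : f (0, 0) ≠ 0) (h : pmul p f = pmul q f) : p = q := by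
  have key : ∀ s a b, a + b = s → p (a, b) = q (a, b) := by
    intro s
    induction s using Nat.strong_induction_on with
    | _ s ih =>
      intro a b hab
      have h1 := congrFun h (a, b)
      unfold pmul at h1
      simp only at h1
      rw [← Finset.sum_product' (range (a+1)) (range (b+1))
          (fun x y => p (x, y) * f (a - x, b - y)),
        ← Finset.sum_product' (range (a+1)) (range (b+1))
          (fun x y => q (x, y) * f (a - x, b - y))] at h1
      have hm : (a, b) ∈ range (a+1) ×ˢ range (b+1) := by simp
      rw [← Finset.add_sum_erase _ _ hm, ← Finset.add_sum_erase _ _ hm] at h1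
      have h2 : ∑ x ∈ (range (a+1) ×ˢ range (b+1)).erase (a, b),
            p (x.1, x.2) * f (a - x.1, b - x.2)
          = ∑ x ∈ (range (a+1) ×ˢ range (b+1)).erase (a, b),
            q (x.1, x.2) * f (a - x.1, b - x.2) := by
        apply Finset.sum_congr rfl
        rintro ⟨x, y⟩ hx
        simp at hx
        rw [ih (x + y) (by omega) x y rfl]
      rw [h2] at h1
      simp only [Nat.sub_self] at h1
      exact mul_right_cancel₀ hf0 (add_right_cancel h1)
  funext ⟨a, b⟩
  exact key _ a b rfl

def cst (c : ℂ) : Coef := fun ab => if ab = (0, 0) then c else 0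

theorem cst_inPn (n : ℕ) (c : ℂ) : inPn n (cst c) := by
  intro ab h
  refine ⟨0, Nat.zero_le _, ?_⟩
  by_contra h'
  apply h
  simp [cst, show ab ≠ (0, 0) from fun h2 => h' (by rw [h2]; rfl)]

theorem cst_sum (f : Coef) (hf : MemH2 f) (n : ℕ) (c : ℂ) :
    (∑ ab ∈ suppN n, cst c ab • shiftH f hf ab : HH) = c • shiftH f hf (0, 0) := by
  rw [Finset.sum_eq_single (0, 0)]
  · simp [cst]
  · intro b _ hb; simp [cst, hb]
  · intro h; exact absurd (mem_suppN.2 ⟨0, Nat.zero_le _, rfl⟩) h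

theorem Hinner_shift (f : Coef) (hf : MemH2 f) (ab : ℕ × ℕ) :
    inner ℂ (shiftH f hf ab) (shiftH f hf (0, 0)) = Hinner f (pmul (mono ab) f) := by
  rw [inner_eq]
  simp [shiftH, pmul_mono_zero]

theorem shift_one (f : Coef) (hf : MemH2 f) (ab : ℕ × ℕ) (h : ab ≠ (0, 0)) :
    inner ℂ (shiftH f hf ab) oneHH = 0 := by
  rw [inner_one]
  have : pmul (mono ab) f (0, 0) = 0 := by
    rw [pmul_mono, if_neg]
    rintro ⟨h1, h2⟩
    exact h (by ext <;> simp at * <;> assumption)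
  simp [shiftH, this]

theorem Hnorm_f (f : Coef) (hf : MemH2 f) : Hnorm f = ‖shiftH f hf (0, 0)‖ := by
  rw [← Hnorm_eq]
  simp [shiftH, pmul_mono_zero]

/-- Let `f ∈ H²(𝔻²)` with `f(0) ≠ 0`. Then `f` is weakly inner
(`⟨f, z^a w^b f⟩ = 0` for all `(a,b) ≠ (0,0)`) iff every OPA to `1/f` equals the constant
`conj(f(0))/‖f‖²`. -/
theorem statement12 (f : Coef) (hf : MemH2 f) (hf0 : f (0, 0) ≠ 0) :
    (∀ a b : ℕ, (a, b) ≠ (0, 0) → Hinner f (pmul (mono (a, b)) f) = 0) ↔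
    (∀ n : ℕ, ∀ p : Coef, IsOPA f n p →
      p = fun ab => if ab = (0, 0) then
        (starRingEnd ℂ) (f (0, 0)) / ((Hnorm f : ℂ) ^ 2) else 0) := by
  have hF0 : (shiftH f hf (0, 0) : HH) ≠ 0 := by
    intro h
    apply hf0
    have := congrArg (fun g : HH => g (0, 0)) h
    simpa [shiftH, pmul_mono_zero] using this
  have hnF : ((Hnorm f : ℂ) ^ 2) ≠ 0 := by
    rw [Hnorm_f f hf]
    exact pow_ne_zero _ (by exact_mod_cast norm_ne_zero_iff.2 hF0)
  set c : ℂ := (starRingEnd ℂ) (f (0, 0)) / ((Hnorm f : ℂ) ^ 2) with hc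
  have hc0 : c ≠ 0 := div_ne_zero (by simpa using hf0) hnF
  change _ ↔ (∀ n : ℕ, ∀ p : Coef, IsOPA f n p → p = cst c)
  constructor
  · intro hw n p hp
    have horth : ∀ ab, inner ℂ (shiftH f hf ab) (c • shiftH f hf (0, 0) - oneHH) = 0 := by
      intro ab
      rw [inner_sub_right, inner_smul_right]
      by_cases h : ab = (0, 0)
      · subst h
        rw [inner_self_eq_norm_sq_to_K, inner_one]
        have : (shiftH f hf (0, 0)) (0, 0) = f (0, 0) := by simp [shiftH, pmul_mono_zero]
        rw [this, hc, Hnorm_f f hf] at *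
        rw [sub_eq_zero]
        exact div_mul_cancel₀ _ hnF
      · rw [shift_one f hf ab h, Hinner_shift, hw ab.1 ab.2 h]; simp
    have h1 := hp.2 _ (cst_inPn n c)
    rw [norm_pmul f hf n _ hp.1, norm_pmul f hf n _ (cst_inPn n c), cst_sum] at h1
    set G : HH := ∑ ab ∈ suppN n, p ab • shiftH f hf ab with hG
    have h2 : inner ℂ (G - c • shiftH f hf (0, 0)) (c • shiftH f hf (0, 0) - oneHH) = 0 := by
      rw [inner_sub_left, inner_smul_left, horth, hG, sum_inner]
      simp [inner_smul_left, horth]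
    have h3 := norm_add_sq_eq_norm_sq_add_norm_sq_of_inner_eq_zero _ _ h2
    rw [sub_add_sub_cancel] at h3
    have h4 : ‖G - c • shiftH f hf (0, 0)‖ = 0 := by
      nlinarith [norm_nonneg (G - oneHH), norm_nonneg (c • shiftH f hf (0, 0) - oneHH),
        norm_nonneg (G - c • shiftH f hf (0, 0))]
    have h5 : G = c • shiftH f hf (0, 0) := sub_eq_zero.1 (norm_eq_zero.1 h4)
    apply pmul_inj f _ _ hf0
    funext jk
    rw [pmul_eq_sum f hf n p hp.1, pmul_eq_sum f hf n _ (cst_inPn n c), cst_sum, ← hG, h5]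
  · intro hw a b hab
    obtain ⟨n, hn⟩ := chi_surj' (a, b)
    classical
    set V : Submodule ℂ HH := Submodule.span ℂ (((suppN n).image (shiftH f hf) : Finset HH) : Set HH)
      with hV
    have hfd : FiniteDimensional ℂ V := FiniteDimensional.span_finset ℂ _
    have hmem : ∀ ab ∈ suppN n, shiftH f hf ab ∈ V := fun ab h =>
      Submodule.subset_span (by exact_mod_cast Finset.mem_image_of_mem _ h)
    obtain ⟨x, hxV, hx⟩ := V.exists_norm_eq_iInf_of_complete_subspace
      (completeSpace_coe_iff_isComplete.1 (FiniteDimensional.complete ℂ V)) (oneHH)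
    have horth := (V.norm_eq_iInf_iff_inner_eq_zero hxV).1 hx
    have hx' : ∃ d : ℕ × ℕ → ℂ, ∑ ab ∈ suppN n, d ab • shiftH f hf ab = x := by
      rw [hV, Finset.coe_image] at hxV
      obtain ⟨e, he⟩ := (Submodule.mem_span_image_finset_iff_exists_fun ℂ).1 hxV
      refine ⟨fun ab => if h : ab ∈ suppN n then e ⟨ab, h⟩ else 0, ?_⟩
      rw [← he, ← Finset.sum_coe_sort]
      apply Finset.sum_congr rfl
      intro i _
      simp
    obtain ⟨d, hd⟩ := hx'
    let p : Coef := fun ab => if ab ∈ suppN n then d ab else 0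
    have hp : inPn n p := by
      intro ab h
      apply mem_suppN.1
      by_contra h'
      exact h (by simp [p, h'])
    have hpx : ∑ ab ∈ suppN n, p ab • shiftH f hf ab = x := by
      rw [← hd]
      apply Finset.sum_congr rfl
      intro ab h
      simp [p, h]
    have hopa : IsOPA f n p := by
      refine ⟨hp, fun q hq => ?_⟩
      rw [norm_pmul f hf n _ hp, norm_pmul f hf n _ hq, hpx, norm_sub_rev, hx, norm_sub_rev]
      have hq' : (∑ ab ∈ suppN n, q ab • shiftH f hf ab) ∈ V :=
        Submodule.sum_mem _ fun ab h => V.smul_mem _ (hmem ab h)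
      exact ciInf_le ⟨0, by rintro _ ⟨y, rfl⟩; exact norm_nonneg _⟩ (⟨_, hq'⟩ : V)
    have hpc := hw n p hopa
    rw [hpc, cst_sum] at hpx
    have h1 := horth _ (hmem (a, b) (mem_suppN.2 ⟨n, le_rfl, hn⟩))
    rw [← hpx, inner_eq_zero_symm, inner_sub_right, shift_one f hf _ hab, inner_smul_right,
      Hinner_shift] at h1
    simpa [hc0] using h1
end
end
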